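/- arXiv:1609.03107 — 6 statements merged into one kernel-verified Lean document; each statement's English description precedes it below -/
import Mathlib

section
/- Let T > 0 and let h : [0,T] → ℝ be Lebesgue integrable. Define H(t) := ∫₀ᵗ h(s) ds for t ∈ [0,T]. Suppose that for every t ∈ [0,T]: if H(t) > 0 then h(t) ≤ 0, and if H(t) < 0 then h(t) ≥ 0. Then H(t) = 0 for every t ∈ [0,T]. -/
open MeasureTheory Set

theorem stmt2_aux (T : ℝ) (h : ℝ → ℝ)
    (hint : IntegrableOn h (Icc 0 T))
    (hsign : ∀ t ∈ Icc (0 : ℝ) T, (0 < ∫ s in (0 : ℝ)..t, h s) → h t ≤ 0) :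
    ∀ t ∈ Icc (0 : ℝ) T, (∫ s in (0 : ℝ)..t, h s) ≤ 0 := by
  intro t ht
  by_contra! hpos
  have hint' : IntegrableOn h (uIcc 0 t) := by
    rw [uIcc_of_le ht.1]
    exact hint.mono_set (Icc_subset_Icc_right ht.2)
  have hc := intervalIntegral.continuousOn_primitive_interval hint'
  rw [uIcc_of_le ht.1] at hc
  have hcl : IsClosed (Icc 0 t ∩ (fun x => ∫ s in (0 : ℝ)..x, h s) ⁻¹' Iic 0) :=
    hc.preimage_isClosed_of_isClosed isClosed_Icc isClosed_Iic
  have hK := isCompact_Icc.of_isClosed_subset hcl inter_subset_left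
  obtain ⟨a, ⟨ha, hHa⟩, hmax⟩ := hK.exists_isGreatest ⟨0, by simp [ht.1]⟩
  have hHa' : (∫ s in (0 : ℝ)..a, h s) ≤ 0 := hHa
  have hi : ∀ x ∈ Icc 0 t, ∀ y ∈ Icc 0 t, IntervalIntegrable h volume x y := by
    intro x hx y hy
    refine IntegrableOn.intervalIntegrable (hint'.mono_set ?_)
    rw [uIcc_of_le ht.1]
    exact uIcc_subset_Icc hx hy
  have h0 : (0 : ℝ) ∈ Icc 0 t := ⟨le_rfl, ht.1⟩
  have h1 : t ∈ Icc 0 t := ⟨ht.1, le_rfl⟩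
  have hadd := intervalIntegral.integral_add_adjacent_intervals (hi 0 h0 a ha) (hi a ha t h1)
  have hle : (∫ s in a..t, h s) ≤ 0 := by
    rw [intervalIntegral.integral_of_le ha.2]
    refine setIntegral_nonpos measurableSet_Ioc fun x hx => ?_
    have hx0 : 0 ≤ x := ha.1.trans hx.1.le
    refine hsign x ⟨hx0, hx.2.trans ht.2⟩ ?_
    by_contra! hn
    exact absurd (hmax ⟨⟨hx0, hx.2⟩, hn⟩) (not_le.mpr hx.1)
  linarith

/-- If `h` is integrable on `[0,T]`, `H t = ∫₀ᵗ h`, and for every `t ∈ [0,T]`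
`H t > 0 → h t ≤ 0` and `H t < 0 → h t ≥ 0`, then `H ≡ 0` on `[0,T]`. -/
theorem stmt2 (T : ℝ) (hT : 0 < T) (h : ℝ → ℝ)
    (hint : IntegrableOn h (Icc 0 T))
    (hsign : ∀ t ∈ Icc (0 : ℝ) T,
      ((0 < ∫ s in (0 : ℝ)..t, h s) → h t ≤ 0) ∧
      ((∫ s in (0 : ℝ)..t, h s) < 0 → 0 ≤ h t)) :
    ∀ t ∈ Icc (0 : ℝ) T, (∫ s in (0 : ℝ)..t, h s) = 0 := by
  intro t ht
  refine le_antisymm (stmt2_aux T h hint (fun t ht => (hsign t ht).1) t ht) ?_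
  have := stmt2_aux T (fun s => -h s) hint.neg (fun t ht hp => by
    rw [intervalIntegral.integral_neg] at hp
    have := (hsign t ht).2 (by linarith)
    linarith) t ht
  rw [intervalIntegral.integral_neg] at this
  linarith
end

section
/- Let (m_n) and m be Borel probability measures on ℝ such that m_n converges weakly to m and m is absolutely continuous with respect to Lebesgue measure. Then for every δ > 0 and c > 0, sup_{j ∈ ℕ₀} m_n([jδ, jδ + c]) → sup_{j ∈ ℕ₀} m([jδ, jδ + c]) as n → ∞. -/
open MeasureTheory Set Filter Topology BoundedContinuousFunction

/-- if probability measures `m n` on `ℝ` converge weakly to `μ` and `μ` is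
absolutely continuous with respect to Lebesgue measure, then for all `δ, c > 0`,
`sup_j m n [jδ, jδ+c] → sup_j μ [jδ, jδ+c]`. -/
theorem stmt4 (m : ℕ → Measure ℝ) (μ : Measure ℝ)
    (hm : ∀ n, IsProbabilityMeasure (m n)) (hμ : IsProbabilityMeasure μ)
    (hweak : ∀ f : ℝ →ᵇ ℝ,
      Tendsto (fun n => ∫ x, f x ∂(m n)) atTop (𝓝 (∫ x, f x ∂μ)))
    (hac : μ ≪ volume) (δ c : ℝ) (hδ : 0 < δ) (hc : 0 < c) :
    Tendsto (fun n => ⨆ j : ℕ, m n (Icc ((j : ℝ) * δ) ((j : ℝ) * δ + c)))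
      atTop (𝓝 (⨆ j : ℕ, μ (Icc ((j : ℝ) * δ) ((j : ℝ) * δ + c)))) := by
  let M : ℕ → ProbabilityMeasure ℝ := fun n => ⟨m n, hm n⟩
  let N : ProbabilityMeasure ℝ := ⟨μ, hμ⟩
  have hMN : Tendsto M atTop (𝓝 N) :=
    ProbabilityMeasure.tendsto_iff_forall_integral_tendsto.mpr hweak
  have key : ∀ s : Set ℝ, μ (frontier s) = 0 →
      Tendsto (fun n => m n s) atTop (𝓝 (μ s)) := fun s hs =>
    ProbabilityMeasure.tendsto_measure_of_null_frontier_of_tendsto' hMN hs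
  have kI : ∀ j : ℕ, Tendsto (fun n => m n (Icc ((j : ℝ) * δ) ((j : ℝ) * δ + c))) atTop
      (𝓝 (μ (Icc ((j : ℝ) * δ) ((j : ℝ) * δ + c)))) := by
    intro j
    apply key
    apply hac
    rw [frontier_Icc (by linarith)]
    exact (Set.toFinite _).measure_zero _
  have kT : ∀ j : ℕ, Tendsto (fun n => m n (Ici ((j : ℝ) * δ))) atTop
      (𝓝 (μ (Ici ((j : ℝ) * δ)))) := by
    intro j
    apply key
    apply hac
    rw [frontier_Ici]
    exact (Set.toFinite _).measure_zero _
  have tail : Tendsto (fun j : ℕ => μ (Ici ((j : ℝ) * δ))) atTop (𝓝 0) := by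
    have h := tendsto_measure_iInter_atTop (μ := μ) (s := fun j : ℕ => Ici ((j : ℝ) * δ))
      (fun j => measurableSet_Ici.nullMeasurableSet)
      (fun i j hij => Ici_subset_Ici.mpr (by gcongr)) ⟨0, measure_ne_top _ _⟩
    have he : ⋂ j : ℕ, Ici ((j : ℝ) * δ) = ∅ := by
      ext x
      simp only [mem_iInter, mem_Ici, mem_empty_iff_false, iff_false, not_forall, not_le]
      obtain ⟨j, hj⟩ := exists_nat_gt (x / δ)
      exact ⟨j, (div_lt_iff₀ hδ).mp hj⟩
    rw [he, measure_empty] at h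
    exact h
  rw [tendsto_order]
  constructor
  · intro a ha
    obtain ⟨j, hj⟩ := lt_iSup_iff.mp ha
    filter_upwards [(kI j).eventually_const_lt hj] with n hn
    exact lt_iSup_iff.mpr ⟨j, hn⟩
  · intro b hb
    obtain ⟨a, ha, hab⟩ := exists_between hb
    have ha0 : 0 < a := lt_of_le_of_lt bot_le ha
    obtain ⟨J, hJ⟩ := (tail.eventually_lt_const ha0).exists
    have hfin : ∀ᶠ n in atTop, ∀ j ∈ Finset.range J,
        m n (Icc ((j : ℝ) * δ) ((j : ℝ) * δ + c)) < a := by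
      rw [Filter.eventually_all_finset]
      intro j _
      exact (kI j).eventually_lt_const (lt_of_le_of_lt (le_iSup
        (fun j : ℕ => μ (Icc ((j : ℝ) * δ) ((j : ℝ) * δ + c))) j) ha)
    filter_upwards [hfin, (kT J).eventually_lt_const hJ] with n h1 h2
    refine lt_of_le_of_lt (iSup_le fun j => ?_) hab
    by_cases hj : j < J
    · exact (h1 j (Finset.mem_range.mpr hj)).le
    · refine le_trans (measure_mono ?_) h2.le
      intro x hx
      have : (J : ℝ) * δ ≤ j * δ := by
        have : (J : ℝ) ≤ j := by exact_mod_cast not_lt.mp hj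
        gcongr
      exact this.trans hx.1
end

section
/- Let T > 0, d ∈ ℕ, and let ζ : ℝ^d → [0,∞) be continuous and satisfy the subquadratic growth condition. Let (π_n) be a sequence of measurable maps from [0,T] to M(ℝ^d) and π a measurable map from [0,T] to M(ℝ^d) such that: (a) sup_n ∫₀^T ∫_{ℝ^d} ‖x‖² dπ_n(s)(x) ds < ∞; and (b) for every s ∈ [0,T], π_n(s) converges weakly to π(s). Then for every t ∈ [0,T], ∫₀ᵗ ⟨ζ, π_n(s)⟩ ds → ∫₀ᵗ ⟨ζ, π(s)⟩ ds as n → ∞. -/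
open MeasureTheory Set BoundedContinuousFunction Filter Topology ENNReal NNReal

lemma growth_aux {E : Type*} [NormedAddCommGroup E] (ζ : E → ℝ) (Cζ p : ℝ) (hC : 0 < Cζ)
    (hp0 : 0 ≤ p) (hp2 : p < 2)
    (hgrowth : ∀ x, ζ x ≤ Cζ * (1 + ‖x‖ ^ p)) (ε : ℝ) (hε : 0 < ε) :
    ∃ K : ℝ, 0 ≤ K ∧ ∀ x, ζ x ≤ min (ζ x) K + ε * ‖x‖ ^ 2 := by
  have h1 : Tendsto (fun r : ℝ => r ^ (2 - p)) atTop atTop := tendsto_rpow_atTop (by linarith)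
  obtain ⟨R, hR⟩ := eventually_atTop.1 (h1.eventually_ge_atTop (Cζ / ε))
  set R' := max R 1
  refine ⟨Cζ * (1 + R' ^ p), by positivity, fun x => ?_⟩
  rcases le_total (ζ x) (Cζ * (1 + R' ^ p)) with h | h
  · rw [min_eq_left h]
    have : 0 ≤ ε * ‖x‖ ^ 2 := by positivity
    linarith
  rw [min_eq_right h]
  have hx := hgrowth x
  have hR' : 0 ≤ R' ^ p := by positivity
  rcases le_total ‖x‖ R' with h' | h'
  · have : ‖x‖ ^ p ≤ R' ^ p := Real.rpow_le_rpow (norm_nonneg _) h' hp0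
    have : 0 ≤ ε * ‖x‖ ^ 2 := by positivity
    nlinarith
  · have hpos : 0 < ‖x‖ := lt_of_lt_of_le (by positivity) h'
    have h2 := hR ‖x‖ ((le_max_left _ _).trans h')
    rw [div_le_iff₀ hε] at h2
    have h3 : ‖x‖ ^ 2 = ‖x‖ ^ (2 - p) * ‖x‖ ^ p := by
      rw [← Real.rpow_add hpos]; norm_num
    have h4 : 0 ≤ ‖x‖ ^ p := by positivity
    have h5 : Cζ * ‖x‖ ^ p ≤ ε * ‖x‖ ^ 2 := by
      rw [h3]; nlinarith
    nlinarith [mul_nonneg hC.le hR']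

/-- Bounded continuous truncation. -/
noncomputable def truncB {E : Type*} [TopologicalSpace E] (ζ : E → ℝ) (hζc : Continuous ζ)
    (hζ0 : ∀ x, 0 ≤ ζ x) (K : ℝ) : E →ᵇ ℝ :=
  BoundedContinuousFunction.ofNormedAddCommGroup (fun x => min (ζ x) K)
    (hζc.min continuous_const) |K| (fun x => by
      rw [Real.norm_eq_abs, abs_le]
      refine ⟨le_min ?_ (neg_abs_le K), (min_le_right _ _).trans (le_abs_self K)⟩
      linarith [hζ0 x, abs_nonneg K])

lemma limit_moment {E : Type*} [NormedAddCommGroup E] [MeasurableSpace E] [BorelSpace E]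
    (M : ℕ → Measure E) (M' : Measure E)
    [∀ n, IsFiniteMeasure (M n)] [IsFiniteMeasure M'] (C : ℝ≥0∞) (hC : C ≠ ⊤)
    (hmom : ∀ n, ∫⁻ x, (‖x‖₊ : ℝ≥0∞) ^ 2 ∂(M n) ≤ C)
    (hweak : ∀ f : E →ᵇ ℝ, Tendsto (fun n => ∫ x, f x ∂(M n)) atTop (𝓝 (∫ x, f x ∂M'))) :
    ∫⁻ x, (‖x‖₊ : ℝ≥0∞) ^ 2 ∂M' ≤ C := by
  have hsq : ∀ x : E, (‖x‖₊ : ℝ≥0∞) ^ 2 = ENNReal.ofReal (‖x‖ ^ 2) := fun x => by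
    rw [ENNReal.ofReal_pow (norm_nonneg _), ofReal_norm]; rfl
  simp only [hsq] at hmom ⊢
  let g : ℕ → E →ᵇ ℝ := fun N => truncB (fun x => ‖x‖ ^ 2) (by fun_prop) (fun x => by positivity) N
  have hg0 : ∀ N x, 0 ≤ g N x := fun N x => le_min (by positivity) (by positivity)
  have hb : ∀ N, ∫⁻ x, ENNReal.ofReal (g N x) ∂M' ≤ C := fun N => by
    rw [← ofReal_integral_eq_lintegral_ofReal ((g N).integrable M') (ae_of_all _ (hg0 N))]
    refine ENNReal.ofReal_le_of_le_toReal ?_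
    refine le_of_tendsto' (hweak (g N)) fun n => ?_
    rw [← ENNReal.ofReal_le_iff_le_toReal hC,
      ofReal_integral_eq_lintegral_ofReal ((g N).integrable _) (ae_of_all _ (hg0 N))]
    exact (lintegral_mono fun x => ENNReal.ofReal_le_ofReal (min_le_left _ _)).trans (hmom n)
  refine le_of_tendsto' (lintegral_tendsto_of_tendsto_of_monotone
    (f := fun N x => ENNReal.ofReal (g N x))
    (fun N => ((g N).continuous.measurable.ennreal_ofReal).aemeasurable)
    (ae_of_all _ fun x a b hab => ENNReal.ofReal_le_ofReal
      (min_le_min le_rfl (by exact_mod_cast hab))) (ae_of_all _ fun x => ?_)) hb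
  refine (tendsto_const_nhds).congr' ?_
  obtain ⟨N, hN⟩ := exists_nat_ge (‖x‖ ^ 2)
  filter_upwards [eventually_ge_atTop N] with m hm
  have : (N : ℝ) ≤ m := by exact_mod_cast hm
  exact congrArg _ (min_eq_left (hN.trans this)).symm

lemma conv_aux {E : Type*} [NormedAddCommGroup E] [MeasurableSpace E] [BorelSpace E]
    (ζ : E → ℝ) (hζc : Continuous ζ) (hζ0 : ∀ x, 0 ≤ ζ x)
    (Cζ p : ℝ) (hC : 0 < Cζ) (hp0 : 0 ≤ p) (hp2 : p < 2)
    (hgrowth : ∀ x, ζ x ≤ Cζ * (1 + ‖x‖ ^ p))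
    (M : ℕ → Measure E) (M' : Measure E)
    [∀ n, IsFiniteMeasure (M n)] [IsFiniteMeasure M'] (C : ℝ≥0∞) (hC' : C ≠ ⊤)
    (hmom : ∀ n, ∫⁻ x, (‖x‖₊ : ℝ≥0∞) ^ 2 ∂(M n) ≤ C)
    (hweak : ∀ f : E →ᵇ ℝ, Tendsto (fun n => ∫ x, f x ∂(M n)) atTop (𝓝 (∫ x, f x ∂M'))) :
    (∀ n, Integrable ζ (M n)) ∧ Integrable ζ M' ∧
    Tendsto (fun n => ∫ x, ζ x ∂(M n)) atTop (𝓝 (∫ x, ζ x ∂M')) := by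
  have hmom' := limit_moment M M' C hC' hmom hweak
  have hsq : ∀ x : E, (‖x‖₊ : ℝ≥0∞) ^ 2 = ENNReal.ofReal (‖x‖ ^ 2) := fun x => by
    rw [ENNReal.ofReal_pow (norm_nonneg _), ofReal_norm]; rfl
  simp only [hsq] at hmom hmom'
  have key : ∀ ν : Measure E, IsFiniteMeasure ν → ∫⁻ x, ENNReal.ofReal (‖x‖ ^ 2) ∂ν ≤ C →
      Integrable ζ ν ∧ ∀ ε K : ℝ, 0 < ε → (∀ x, ζ x ≤ min (ζ x) K + ε * ‖x‖ ^ 2) →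
        |∫ x, ζ x ∂ν - ∫ x, truncB ζ hζc hζ0 K x ∂ν| ≤ ε * C.toReal := by
    intro ν _ hν
    have hi2 : Integrable (fun x : E => ‖x‖ ^ 2) ν := by
      refine ⟨(by fun_prop : Measurable fun x : E => ‖x‖ ^ 2).aestronglyMeasurable, ?_⟩
      rw [hasFiniteIntegral_iff_ofReal (ae_of_all _ fun x => by positivity)]
      exact hν.trans_lt hC'.lt_top
    have h2 : ∫ x, ‖x‖ ^ 2 ∂ν ≤ C.toReal := by
      rw [← ENNReal.ofReal_le_iff_le_toReal hC',
        ofReal_integral_eq_lintegral_ofReal hi2 (ae_of_all _ fun x => by positivity)]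
      exact hν
    have hiζ : Integrable ζ ν := by
      obtain ⟨K, hK0, hK⟩ := growth_aux ζ Cζ p hC hp0 hp2 hgrowth 1 one_pos
      refine Integrable.mono' (((truncB ζ hζc hζ0 K).integrable ν).add (hi2.const_mul 1))
        hζc.measurable.aestronglyMeasurable (ae_of_all _ fun x => ?_)
      rw [Real.norm_of_nonneg (hζ0 x)]
      exact hK x
    refine ⟨hiζ, fun ε K hε hK => ?_⟩
    rw [← integral_sub hiζ ((truncB ζ hζc hζ0 K).integrable ν), abs_of_nonneg
      (integral_nonneg fun x => sub_nonneg.2 (min_le_left _ _))]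
    refine (integral_mono (hiζ.sub ((truncB ζ hζc hζ0 K).integrable ν)) (hi2.const_mul ε)
      fun x => ?_).trans ?_
    · exact sub_le_iff_le_add'.2 (hK x)
    · rw [integral_const_mul]; gcongr
  refine ⟨fun n => (key _ inferInstance (hmom n)).1, (key _ inferInstance hmom').1, ?_⟩
  rw [Metric.tendsto_atTop']
  intro δ hδ
  set c := C.toReal with hc
  have hc0 : 0 ≤ c := ENNReal.toReal_nonneg
  set ε := δ / (3 * (c + 1)) with hεd
  have hε : 0 < ε := by positivity
  have hεc : ε * c ≤ δ / 3 := by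
    rw [hεd, div_mul_eq_mul_div, div_le_div_iff₀ (by positivity) (by positivity)]
    nlinarith
  obtain ⟨K, hK0, hK⟩ := growth_aux ζ Cζ p hC hp0 hp2 hgrowth ε hε
  obtain ⟨N, hN⟩ := Metric.tendsto_atTop'.1 (hweak (truncB ζ hζc hζ0 K)) (δ / 3) (by positivity)
  refine ⟨N, fun n hn => ?_⟩
  have h1 := hN n hn
  have h2 := (key _ inferInstance (hmom n)).2 ε K hε hK
  have h3 := (key _ inferInstance hmom').2 ε K hε hK
  rw [Real.dist_eq, abs_lt] at *
  rw [abs_le] at h2 h3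
  constructor <;> linarith [h1.1, h1.2, h2.1, h2.2, h3.1, h3.2]

lemma bind_integral_aux {α E : Type*} [MeasurableSpace α] [MeasurableSpace E]
    {μ : Measure α} [IsFiniteMeasure μ] {κ : ProbabilityTheory.Kernel α E}
    [ProbabilityTheory.IsFiniteKernel κ] {f : E → ℝ} (hf : Integrable f (μ.bind κ)) :
    ∫ x, f x ∂(μ.bind κ) = ∫ s, ∫ x, f x ∂(κ s) ∂μ := by
  have h := ProbabilityTheory.Kernel.integral_comp (η := κ)
    (κ := ProbabilityTheory.Kernel.const Unit μ) (a := ()) (f := f)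
  rw [ProbabilityTheory.Kernel.comp_apply, ProbabilityTheory.Kernel.const_apply] at h
  exact h hf

/-- if sub-probability measure valued maps `π n` on `[0,T]` have uniformly
bounded integrated second moments and `π n s → π s` weakly for every `s ∈ [0,T]`, then for a
continuous `ζ ≥ 0` of subquadratic growth, `∫₀ᵗ ⟨ζ, π n (s)⟩ ds → ∫₀ᵗ ⟨ζ, π(s)⟩ ds` for every
`t ∈ [0,T]`. -/
theorem stmt6 (T : ℝ) (hT : 0 < T) (d : ℕ)
    (ζ : EuclideanSpace ℝ (Fin d) → ℝ) (hζc : Continuous ζ) (hζ0 : ∀ x, 0 ≤ ζ x)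
    (Cζ p : ℝ) (hC : 0 < Cζ) (hp0 : 0 ≤ p) (hp2 : p < 2)
    (hgrowth : ∀ x, ζ x ≤ Cζ * (1 + ‖x‖ ^ p))
    (π : ℕ → ℝ → Measure (EuclideanSpace ℝ (Fin d)))
    (πlim : ℝ → Measure (EuclideanSpace ℝ (Fin d)))
    (hmeas : ∀ n, Measurable (π n)) (hmeaslim : Measurable πlim)
    (hsub : ∀ n s, π n s univ ≤ 1) (hsublim : ∀ s, πlim s univ ≤ 1)
    (C : ℝ≥0∞) (hC' : C ≠ ⊤)
    (hmom : ∀ n, (∫⁻ s in Icc (0 : ℝ) T,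
        ∫⁻ x, (‖x‖₊ : ℝ≥0∞) ^ 2 ∂(π n s) ∂volume) ≤ C)
    (hweak : ∀ s ∈ Icc (0 : ℝ) T, ∀ f : EuclideanSpace ℝ (Fin d) →ᵇ ℝ,
      Tendsto (fun n => ∫ x, f x ∂(π n s)) atTop (𝓝 (∫ x, f x ∂(πlim s)))) :
    ∀ t ∈ Icc (0 : ℝ) T,
      Tendsto (fun n => ∫ s in (0 : ℝ)..t, ∫ x, ζ x ∂(π n s)) atTop
        (𝓝 (∫ s in (0 : ℝ)..t, ∫ x, ζ x ∂(πlim s))) := by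
  intro t ht
  simp only [intervalIntegral.integral_of_le ht.1]
  set μ : Measure ℝ := volume.restrict (Ioc 0 t) with hμ
  let κ : ℕ → ProbabilityTheory.Kernel ℝ (EuclideanSpace ℝ (Fin d)) := fun n => ⟨π n, hmeas n⟩
  let κ' : ProbabilityTheory.Kernel ℝ (EuclideanSpace ℝ (Fin d)) := ⟨πlim, hmeaslim⟩
  have : ∀ n, ProbabilityTheory.IsFiniteKernel (κ n) := fun n => ⟨1, by simp, hsub n⟩
  have : ProbabilityTheory.IsFiniteKernel κ' := ⟨1, by simp, hsublim⟩
  have hIf : ∀ (f : EuclideanSpace ℝ (Fin d) →ᵇ ℝ) n,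
      ∫ x, f x ∂(μ.bind (κ n)) = ∫ s, ∫ x, f x ∂(π n s) ∂μ := fun f n =>
    bind_integral_aux (f.integrable _)
  have hIf' : ∀ (f : EuclideanSpace ℝ (Fin d) →ᵇ ℝ),
      ∫ x, f x ∂(μ.bind κ') = ∫ s, ∫ x, f x ∂(πlim s) ∂μ := fun f =>
    bind_integral_aux (f.integrable _)
  obtain ⟨h1, h2, h3⟩ := conv_aux ζ hζc hζ0 Cζ p hC hp0 hp2 hgrowth (fun n => μ.bind (κ n))
    (μ.bind κ') C hC' (fun n => by
      rw [Measure.lintegral_bind (κ n).measurable.aemeasurable (by fun_prop)]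
      refine le_trans ?_ (hmom n)
      exact lintegral_mono_set (Ioc_subset_Icc_self.trans (Icc_subset_Icc_right ht.2)))
    (fun f => by
      simp only [hIf, hIf']
      refine tendsto_integral_of_dominated_convergence (fun _ => ‖f‖) (fun n => ?_)
        (integrable_const _) (fun n => ae_of_all _ fun s => ?_) ?_
      · exact (StronglyMeasurable.integral_kernel (κ := κ n)
          f.continuous.measurable.stronglyMeasurable).aestronglyMeasurable
      · have : IsFiniteMeasure (π n s) := ⟨(hsub n s).trans_lt one_lt_top⟩
        refine (norm_integral_le_of_norm_le_const (ae_of_all _ f.norm_coe_le_norm)).trans ?_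
        refine mul_le_of_le_one_right (norm_nonneg _) ?_
        exact ENNReal.toReal_le_of_le_ofReal zero_le_one (by simpa using hsub n s)
      · refine (ae_restrict_iff' measurableSet_Ioc).2 (ae_of_all _ fun s hs => ?_)
        exact hweak s ⟨hs.1.le, hs.2.trans ht.2⟩ f)
  have e1 : ∀ n, ∫ x, ζ x ∂(μ.bind (κ n)) = ∫ s, ∫ x, ζ x ∂(π n s) ∂μ := fun n =>
    bind_integral_aux (h1 n)
  have e2 : ∫ x, ζ x ∂(μ.bind κ') = ∫ s, ∫ x, ζ x ∂(πlim s) ∂μ := bind_integral_aux h2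
  simpa only [e1, e2] using h3
end

section
/- Let T > 0, d, n ∈ ℕ, let ζ : ℝ^d → [0,∞) be continuous, let w₁,…,w_n ∈ C([0,T];ℝ^d), and let x₁,…,x_n be pairwise distinct strictly positive real numbers. Then there exists a unique map μ : [0,T] → (finite Borel measures on ℝ^d) such that s ↦ ⟨ζ, μ(s)⟩ is measurable and locally integrable and, for every t ∈ [0,T], μ(t) = (1/n) Σ_{i=1}^n δ_{w_i(t)} · 1{ x_i > ∫₀ᵗ ⟨ζ, μ(s)⟩ ds }. -/
open MeasureTheory Set ENNReal

noncomputable def VV {n : ℕ} (x : Fin n → ℝ) (a : Fin n → ℝ → ℝ) (S : Finset (Fin n)) (A : ℝ → ℝ) (s : ℝ) : ℝ :=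
  ∑ i ∈ S, if A s < x i then a i s else 0

lemma VV_int {n : ℕ} (x : Fin n → ℝ) (a : Fin n → ℝ → ℝ) (ha : ∀ i, Continuous (a i))
    (S : Finset (Fin n)) (A : ℝ → ℝ) (hA : Measurable A) (p q : ℝ) :
    IntervalIntegrable (VV x a S A) volume p q := by
  have h : VV x a S A = ∑ i ∈ S, fun s => if A s < x i then a i s else 0 := by
    ext s; simp [VV]
  rw [h]
  apply IntervalIntegrable.sum
  intro i _
  refine ((ha i).intervalIntegrable p q).mono_fun ?_ ?_
  · exact (Measurable.ite (measurableSet_lt hA measurable_const) (ha i).measurable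
      measurable_const).aestronglyMeasurable
  · refine Filter.Eventually.of_forall fun s => ?_
    dsimp only
    split_ifs <;> simp

lemma exist_aux {n : ℕ} (x : Fin n → ℝ) (a : Fin n → ℝ → ℝ) (ha : ∀ i, Continuous (a i))
    (ha0 : ∀ i s, 0 ≤ a i s) (S : Finset (Fin n)) :
    ∀ t0 c : ℝ, ∃ A : ℝ → ℝ, Measurable A ∧
      ∀ t, t0 ≤ t → A t = c + ∫ s in t0..t, VV x a S A s := by
  induction S using Finset.induction_on_min_value x with
  | empty => intro t0 c; exact ⟨fun _ => c, measurable_const, by simp [VV]⟩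
  | insert j S hj hmin ih =>
    intro t0 c
    set g : ℝ → ℝ := fun s => ∑ i ∈ insert j S, a i s with hg
    have hgc : Continuous g := continuous_finsetSum _ fun i _ => ha i
    set F : ℝ → ℝ := fun t => c + ∫ s in t0..t, g s with hF
    have hFc : Continuous F := continuous_const.add
      (intervalIntegral.continuous_primitive (fun p q => hgc.intervalIntegrable p q) t0)
    have key : ∀ (A : ℝ → ℝ) s, A s < x j → VV x a (insert j S) A s = g s := by
      intro A s hs
      refine Finset.sum_congr rfl fun i hi => if_pos ?_
      rcases Finset.mem_insert.1 hi with rfl | hi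
      · exact hs
      · exact hs.trans_le (hmin i hi)
    by_cases hne : ∀ t, t0 ≤ t → F t < x j
    · refine ⟨F, hFc.measurable, fun t ht => ?_⟩
      rw [hF]; dsimp only
      congr 1
      apply intervalIntegral.integral_congr
      intro s hs
      rw [uIcc_of_le ht] at hs
      exact (key F s (hne s hs.1)).symm
    · push Not at hne
      let K : Set ℝ := {t | t0 ≤ t ∧ x j ≤ F t}
      have hK : IsClosed K := isClosed_Ici.inter (isClosed_le continuous_const hFc)
      have hKb : BddBelow K := ⟨t0, fun t ht => ht.1⟩
      have hKn : K.Nonempty := hne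
      set τ := sInf K with hτ
      have hτK : τ ∈ K := hK.csInf_mem hKn hKb
      have hlt : ∀ s, t0 ≤ s → s < τ → F s < x j := by
        intro s h1 h2
        by_contra h
        exact absurd (csInf_le hKb (show s ∈ K from ⟨h1, not_lt.1 h⟩)) (not_le.2 h2)
      obtain ⟨G, hGm, hG⟩ := ih τ (F τ)
      have hGge : ∀ t, τ ≤ t → x j ≤ G t := by
        intro t ht
        rw [hG t ht]
        have : 0 ≤ ∫ s in τ..t, VV x a S G s := intervalIntegral.integral_nonneg ht
          fun s _ => Finset.sum_nonneg fun i _ => by split_ifs; exacts [ha0 i s, le_rfl]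
        linarith [hτK.2]
      set A : ℝ → ℝ := fun s => if s < τ then F s else G s with hA
      have hAm : Measurable A := Measurable.ite measurableSet_Iio hFc.measurable hGm
      have h1 : ∀ t, t0 ≤ t → t ≤ τ → ∫ s in t0..t, VV x a (insert j S) A s = ∫ s in t0..t, g s := by
        intro t ht0 htτ
        apply intervalIntegral.integral_congr_Ioo_of_le ht0
        intro s hs
        have : s < τ := hs.2.trans_le htτ
        apply key
        simp only [hA, if_pos this]
        exact hlt s hs.1.le this
      refine ⟨A, hAm, fun t ht => ?_⟩
      by_cases htτ : t < τ
      · rw [h1 t ht htτ.le]; simp [hA, htτ, hF]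
      · push Not at htτ
        rw [← intervalIntegral.integral_add_adjacent_intervals
          (VV_int x a ha _ A hAm t0 τ) (VV_int x a ha _ A hAm τ t), h1 τ hτK.1 le_rfl]
        have h2 : ∫ s in τ..t, VV x a (insert j S) A s = ∫ s in τ..t, VV x a S G s := by
          apply intervalIntegral.integral_congr
          intro s hs
          rw [uIcc_of_le htτ] at hs
          have hAs : A s = G s := by simp [hA, not_lt.2 hs.1]
          simp only [VV, hAs]
          rw [Finset.sum_insert hj, if_neg (not_lt.2 (hGge s hs.1)), zero_add]
        rw [h2, ← add_assoc]
        have : A t = G t := by simp [hA, not_lt.2 htτ]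
        rw [this, hG t htτ]

lemma uniq_aux {n : ℕ} (x : Fin n → ℝ) (a : Fin n → ℝ → ℝ)
    (ha0 : ∀ i s, 0 ≤ a i s) (S : Finset (Fin n)) (T : ℝ) (A B : ℝ → ℝ)
    (hAi : IntegrableOn (VV x a S A) (Icc 0 T)) (hBi : IntegrableOn (VV x a S B) (Icc 0 T))
    (hA : ∀ t ∈ Icc 0 T, A t = ∫ s in 0..t, VV x a S A s)
    (hB : ∀ t ∈ Icc 0 T, B t = ∫ s in 0..t, VV x a S B s) :
    ∀ t ∈ Icc 0 T, A t ≤ B t := by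
  intro t ht
  by_contra hlt
  push Not at hlt
  have hT : (0:ℝ) ≤ T := ht.1.trans ht.2
  have hc : ∀ A : ℝ → ℝ, IntegrableOn (VV x a S A) (Icc 0 T) →
      (∀ t ∈ Icc 0 T, A t = ∫ s in 0..t, VV x a S A s) → ContinuousOn A (Icc 0 t) := by
    intro A hAi hA
    have := intervalIntegral.continuousOn_primitive_interval (a := 0) (b := T) (by rwa [uIcc_of_le hT])
    rw [uIcc_of_le hT] at this
    exact (this.congr hA).mono (Icc_subset_Icc_right ht.2)
  have hAc := hc A hAi hA
  have hBc := hc B hBi hB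
  let K : Set ℝ := {s ∈ Icc 0 t | A s ≤ B s}
  have hK : IsClosed K := isClosed_Icc.isClosed_le hAc hBc
  have hKb : BddAbove K := ⟨t, fun s hs => hs.1.2⟩
  have hKn : K.Nonempty := ⟨0, ⟨le_rfl, ht.1⟩, by
    rw [hA 0 ⟨le_rfl, hT⟩, hB 0 ⟨le_rfl, hT⟩]; simp⟩
  set σ := sSup K
  have hσ : σ ∈ K := hK.csSup_mem hKn hKb
  have hgt : ∀ s, σ < s → s ≤ t → B s < A s := by
    intro s h1 h2
    by_contra h
    exact absurd (le_csSup hKb (show s ∈ K from ⟨⟨hσ.1.1.trans h1.le, h2⟩, not_lt.1 h⟩)) (not_le.2 h1)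
  have ii : ∀ f : ℝ → ℝ, IntegrableOn f (Icc 0 T) → ∀ p q, 0 ≤ p → p ≤ q → q ≤ T →
      IntervalIntegrable f volume p q := by
    intro f hf p q h1 h2 h3
    rw [intervalIntegrable_iff_integrableOn_Icc_of_le h2]
    exact hf.mono_set (Icc_subset_Icc h1 h3)
  have e1 := intervalIntegral.integral_add_adjacent_intervals
    (ii _ hAi 0 σ le_rfl hσ.1.1 (hσ.1.2.trans ht.2)) (ii _ hAi σ t hσ.1.1 hσ.1.2 ht.2)
  have e2 := intervalIntegral.integral_add_adjacent_intervals
    (ii _ hBi 0 σ le_rfl hσ.1.1 (hσ.1.2.trans ht.2)) (ii _ hBi σ t hσ.1.1 hσ.1.2 ht.2)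
  have e3 : ∫ s in σ..t, VV x a S A s ≤ ∫ s in σ..t, VV x a S B s := by
    apply intervalIntegral.integral_mono_on_of_le_Ioo hσ.1.2 (ii _ hAi σ t hσ.1.1 hσ.1.2 ht.2)
      (ii _ hBi σ t hσ.1.1 hσ.1.2 ht.2)
    intro s hs
    have := hgt s hs.1 hs.2.le
    refine Finset.sum_le_sum fun i _ => ?_
    have := ha0 i s
    split_ifs <;> linarith
  have hσT : σ ∈ Icc 0 T := ⟨hσ.1.1, hσ.1.2.trans ht.2⟩
  have h5 := hσ.2
  rw [hA σ hσT, hB σ hσT] at h5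
  rw [hA t ht, hB t ht] at hlt
  linarith

lemma int_aux {d n : ℕ} (ζ : EuclideanSpace ℝ (Fin d) → ℝ)
    (x : Fin n → ℝ) (r : ℝ) (y : Fin n → EuclideanSpace ℝ (Fin d)) :
    ∫ z, ζ z ∂((n : ℝ≥0∞)⁻¹ • ∑ i : Fin n, (if r < x i then Measure.dirac (y i) else 0))
      = ∑ i : Fin n, if r < x i then (n : ℝ)⁻¹ * ζ (y i) else 0 := by
  rw [integral_smul_measure, integral_finsetSum_measure, Finset.smul_sum]
  · refine Finset.sum_congr rfl fun i _ => ?_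
    split_ifs <;> simp
  · intro i _
    split_ifs
    · exact integrable_dirac (by simp)
    · exact integrable_zero_measure


/-- well-posedness of the empirical measure equation
`μ(t) = (1/n) Σᵢ δ_{wᵢ(t)} 1{xᵢ > ∫₀ᵗ ⟨ζ, μ(s)⟩ ds}` for continuous `ζ ≥ 0`, continuous
driving paths `wᵢ` and pairwise distinct strictly positive thresholds `xᵢ`: there is a unique
(as a map on `[0,T]`) solution `μ` with `s ↦ ⟨ζ, μ(s)⟩` measurable and integrable on `[0,T]`. -/
theorem stmt8 (T : ℝ) (hT : 0 < T) (d n : ℕ) (hn : 0 < n)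
    (ζ : EuclideanSpace ℝ (Fin d) → ℝ) (hζc : Continuous ζ) (hζ0 : ∀ y, 0 ≤ ζ y)
    (w : Fin n → C(Icc (0 : ℝ) T, EuclideanSpace ℝ (Fin d)))
    (x : Fin n → ℝ) (hxpos : ∀ i, 0 < x i) (hxinj : Function.Injective x) :
    ∃ μ : ℝ → Measure (EuclideanSpace ℝ (Fin d)),
      (IntegrableOn (fun s => ∫ z, ζ z ∂(μ s)) (Icc 0 T) ∧
        ∀ t, ∀ ht : t ∈ Icc (0 : ℝ) T,
          μ t = (n : ℝ≥0∞)⁻¹ • ∑ i : Fin n,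
            (if (∫ s in (0 : ℝ)..t, ∫ z, ζ z ∂(μ s)) < x i
              then Measure.dirac (w i ⟨t, ht⟩) else 0)) ∧
      ∀ μ' : ℝ → Measure (EuclideanSpace ℝ (Fin d)),
        (IntegrableOn (fun s => ∫ z, ζ z ∂(μ' s)) (Icc 0 T) ∧
          ∀ t, ∀ ht : t ∈ Icc (0 : ℝ) T,
            μ' t = (n : ℝ≥0∞)⁻¹ • ∑ i : Fin n,
              (if (∫ s in (0 : ℝ)..t, ∫ z, ζ z ∂(μ' s)) < x i
                then Measure.dirac (w i ⟨t, ht⟩) else 0)) →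
        ∀ t ∈ Icc (0 : ℝ) T, μ' t = μ t := by

  set a : Fin n → ℝ → ℝ := fun i s => (n : ℝ)⁻¹ * ζ (w i (projIcc 0 T hT.le s)) with hadef
  have ha : ∀ i, Continuous (a i) := fun i => continuous_const.mul
    (hζc.comp ((w i).continuous.comp continuous_projIcc))
  have ha0 : ∀ i s, 0 ≤ a i s := fun i s => mul_nonneg (by positivity) (hζ0 _)
  obtain ⟨A, hAm, hA⟩ := exist_aux x a ha ha0 Finset.univ 0 0
  simp only [zero_add] at hA
  let μ : ℝ → Measure (EuclideanSpace ℝ (Fin d)) := fun s =>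
    (n : ℝ≥0∞)⁻¹ • ∑ i : Fin n,
      (if A s < x i then Measure.dirac (w i (projIcc 0 T hT.le s)) else 0)
  have hμ : (fun s => ∫ z, ζ z ∂(μ s)) = VV x a Finset.univ A := by
    ext s; exact int_aux ζ x (A s) _
  have hAI : IntegrableOn (VV x a Finset.univ A) (Icc 0 T) := by
    rw [← intervalIntegrable_iff_integrableOn_Icc_of_le hT.le]
    exact VV_int x a ha _ A hAm 0 T
  refine ⟨μ, ⟨hμ ▸ hAI, ?_⟩, ?_⟩
  · intro t ht
    rw [hμ, ← hA t ht.1]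
    simp only [μ, projIcc_of_mem hT.le ht]
  · rintro μ' ⟨hi, he⟩
    set B : ℝ → ℝ := fun t => ∫ s in (0 : ℝ)..t, ∫ z, ζ z ∂(μ' s) with hBdef
    have hV : ∀ s ∈ Icc 0 T, ∫ z, ζ z ∂(μ' s) = VV x a Finset.univ B s := by
      intro s hs
      rw [he s hs, int_aux]
      simp only [VV, hadef, projIcc_of_mem hT.le hs, hBdef]
    have hBI : IntegrableOn (VV x a Finset.univ B) (Icc 0 T) :=
      hi.congr_fun hV measurableSet_Icc
    have hB : ∀ t ∈ Icc 0 T, B t = ∫ s in 0..t, VV x a Finset.univ B s := by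
      intro t ht
      apply intervalIntegral.integral_congr
      intro s hs
      rw [uIcc_of_le ht.1] at hs
      exact hV s ⟨hs.1, hs.2.trans ht.2⟩
    have hA' : ∀ t ∈ Icc 0 T, A t = ∫ s in 0..t, VV x a Finset.univ A s := fun t ht => hA t ht.1
    intro t ht
    have hAB : B t = A t := le_antisymm
      (uniq_aux x a ha0 _ T B A hBI hAI hB hA' t ht) (uniq_aux x a ha0 _ T A B hAI hBI hA' hB t ht)
    have h := he t ht
    change μ' t = (n : ℝ≥0∞)⁻¹ • ∑ i : Fin n,
      (if B t < x i then Measure.dirac (w i ⟨t, ht⟩) else 0) at h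
    rw [h, hAB]
    simp only [μ, projIcc_of_mem hT.le ht]
end

section
/- In the setting of the previous statement (ζ : ℝ^d → [0,∞) continuous, w₁,…,w_n ∈ C([0,T];ℝ^d), x₁,…,x_n pairwise distinct strictly positive reals, and μ the unique solution of μ(t) = (1/n) Σ_{i=1}^n δ_{w_i(t)} · 1{ x_i > ∫₀ᵗ ⟨ζ, μ(s)⟩ ds }), the map t ↦ μ(t) is right-continuous with left limits in the weak topology on finite measures, and for every t ∈ (0,T] and every Borel set A ⊆ ℝ^d, 0 ≤ μ(t−)(A) − μ(t)(A) ≤ 1/n, where μ(t−) denotes the left limit at t. -/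
open MeasureTheory Set ENNReal BoundedContinuousFunction Filter Topology

open Classical in
theorem stmt9_integral {d n : ℕ} (p : Fin n → Prop) (y : Fin n → EuclideanSpace ℝ (Fin d))
    (f : EuclideanSpace ℝ (Fin d) →ᵇ ℝ) :
    ∫ z, f z ∂((n : ℝ≥0∞)⁻¹ • ∑ i : Fin n, (if p i then Measure.dirac (y i) else 0)) =
      (n : ℝ)⁻¹ * ∑ i : Fin n, (if p i then f (y i) else 0) := by
  rw [integral_smul_measure, integral_finsetSum_measure]
  · simp only [ENNReal.toReal_inv, ENNReal.toReal_natCast, smul_eq_mul]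
    congr 1
    refine Finset.sum_congr rfl fun i _ => ?_
    split_ifs <;> simp
  · intro i _
    split_ifs
    · exact f.integrable _
    · exact integrable_zero_measure

open Classical in
theorem stmt9_tendsto {d n : ℕ} (l : Filter ℝ) (t : ℝ) (hl : l ≤ 𝓝 t)
    (P : ℝ → Fin n → Prop) (p : Fin n → Prop) (hP : ∀ i, ∀ᶠ s in l, (P s i ↔ p i))
    (W : Fin n → ℝ → EuclideanSpace ℝ (Fin d)) (hW : ∀ i, Continuous (W i))
    (μ : ℝ → Measure (EuclideanSpace ℝ (Fin d)))
    (hμ : ∀ᶠ s in l, μ s = (n : ℝ≥0∞)⁻¹ • ∑ i : Fin n,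
      (if P s i then Measure.dirac (W i s) else 0))
    (f : EuclideanSpace ℝ (Fin d) →ᵇ ℝ) :
    Tendsto (fun s => ∫ z, f z ∂(μ s)) l
      (𝓝 (∫ z, f z ∂((n : ℝ≥0∞)⁻¹ • ∑ i : Fin n,
        (if p i then Measure.dirac (W i t) else 0)))) := by
  rw [stmt9_integral]
  have h1 : Tendsto (fun s => (n : ℝ)⁻¹ * ∑ i : Fin n, (if p i then f (W i s) else 0)) l
      (𝓝 ((n : ℝ)⁻¹ * ∑ i : Fin n, (if p i then f (W i t) else 0))) := by
    refine Tendsto.const_mul _ (tendsto_finsetSum _ fun i _ => ?_)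
    split_ifs
    · exact ((f.continuous.comp (hW i)).tendsto t).mono_left hl
    · exact tendsto_const_nhds
  refine h1.congr' ?_
  filter_upwards [hμ, eventually_all.2 hP] with s hs hp
  rw [hs, stmt9_integral]
  simp only [hp]

/-- the solution `μ` of the empirical measure equation
`μ(t) = (1/n) Σᵢ δ_{wᵢ(t)} 1{xᵢ > ∫₀ᵗ ⟨ζ, μ(s)⟩ ds}` (with continuous `ζ ≥ 0`, continuous
paths `wᵢ`, pairwise distinct strictly positive thresholds `xᵢ`) is right-continuous with left
limits in the weak topology, and at every `t ∈ (0,T]` the left limit `ν = μ(t-)` satisfies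
`0 ≤ ν(A) - μ(t)(A) ≤ 1/n` for every Borel set `A`. -/
theorem stmt9 (T : ℝ) (hT : 0 < T) (d n : ℕ) (hn : 0 < n)
    (ζ : EuclideanSpace ℝ (Fin d) → ℝ) (hζc : Continuous ζ) (hζ0 : ∀ y, 0 ≤ ζ y)
    (w : Fin n → C(Icc (0 : ℝ) T, EuclideanSpace ℝ (Fin d)))
    (x : Fin n → ℝ) (hxpos : ∀ i, 0 < x i) (hxinj : Function.Injective x)
    (μ : ℝ → Measure (EuclideanSpace ℝ (Fin d)))
    (hμint : IntegrableOn (fun s => ∫ z, ζ z ∂(μ s)) (Icc 0 T))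
    (hμeq : ∀ t, ∀ ht : t ∈ Icc (0 : ℝ) T,
      μ t = (n : ℝ≥0∞)⁻¹ • ∑ i : Fin n,
        (if (∫ s in (0 : ℝ)..t, ∫ z, ζ z ∂(μ s)) < x i
          then Measure.dirac (w i ⟨t, ht⟩) else 0)) :
    (∀ t ∈ Ico (0 : ℝ) T, ∀ f : EuclideanSpace ℝ (Fin d) →ᵇ ℝ,
      Tendsto (fun s => ∫ z, f z ∂(μ s)) (𝓝[>] t) (𝓝 (∫ z, f z ∂(μ t)))) ∧
    (∀ t ∈ Ioc (0 : ℝ) T, ∃ ν : Measure (EuclideanSpace ℝ (Fin d)),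
      IsFiniteMeasure ν ∧
      (∀ f : EuclideanSpace ℝ (Fin d) →ᵇ ℝ,
        Tendsto (fun s => ∫ z, f z ∂(μ s)) (𝓝[<] t) (𝓝 (∫ z, f z ∂ν))) ∧
      ∀ A : Set (EuclideanSpace ℝ (Fin d)), MeasurableSet A →
        μ t A ≤ ν A ∧ ν A ≤ μ t A + (n : ℝ≥0∞)⁻¹) := by
  classical
  set I : ℝ → ℝ := fun t => ∫ s in (0 : ℝ)..t, ∫ z, ζ z ∂(μ s) with hI
  have hg0 : ∀ s, 0 ≤ ∫ z, ζ z ∂(μ s) := fun s => integral_nonneg hζ0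
  have hIc : ContinuousOn I (Icc 0 T) := by
    have := intervalIntegral.continuousOn_primitive_interval (μ := volume)
      (f := fun s => ∫ z, ζ z ∂(μ s)) (a := 0) (b := T) (by rwa [uIcc_of_le hT.le])
    rwa [uIcc_of_le hT.le] at this
  have hIm : ∀ a b, 0 ≤ a → a ≤ b → b ≤ T → I a ≤ I b := by
    intro a b ha hab hb
    refine intervalIntegral.integral_mono_interval le_rfl ha hab
      (Eventually.of_forall hg0) ?_
    rw [intervalIntegrable_iff_integrableOn_Icc_of_le (ha.trans hab)]
    exact hμint.mono_set (Icc_subset_Icc_right hb)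
  set W : Fin n → ℝ → EuclideanSpace ℝ (Fin d) := fun i s => w i (projIcc 0 T hT.le s) with hWd
  have hW : ∀ i, Continuous (W i) := fun i => (w i).continuous.comp continuous_projIcc
  have hμ : ∀ t ∈ Icc (0 : ℝ) T, μ t = (n : ℝ≥0∞)⁻¹ • ∑ i : Fin n,
      (if I t < x i then Measure.dirac (W i t) else 0) := by
    intro t ht
    rw [hμeq t ht]
    simp only [hWd, projIcc_of_mem hT.le ht, hI]
  refine ⟨fun t ht f => ?_, fun t ht => ?_⟩
  · have htI : t ∈ Icc (0 : ℝ) T := ⟨ht.1, ht.2.le⟩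
    have hev : ∀ᶠ s in 𝓝[>] t, s ∈ Ioo t T := Ioo_mem_nhdsGT ht.2
    rw [hμ t htI]
    refine stmt9_tendsto _ t nhdsWithin_le_nhds (fun s i => I s < x i) _ ?_ W hW μ ?_ f
    · intro i
      by_cases h : I t < x i
      · have hle : 𝓝[>] t ≤ 𝓝[Icc 0 T] t := by
          refine le_inf nhdsWithin_le_nhds (le_principal_iff.2 ?_)
          filter_upwards [hev] with s hs using ⟨ht.1.trans hs.1.le, hs.2.le⟩
        filter_upwards [((hIc t htI).mono_left hle).eventually (gt_mem_nhds h)] with s hs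
        exact ⟨fun _ => h, fun _ => hs⟩
      · filter_upwards [hev] with s hs
        exact ⟨fun h' => (hIm t s ht.1 hs.1.le hs.2.le).trans_lt h', fun h' => absurd h' h⟩
    · filter_upwards [hev] with s hs using hμ s ⟨ht.1.trans hs.1.le, hs.2.le⟩
  · have htI : t ∈ Icc (0 : ℝ) T := ⟨ht.1.le, ht.2⟩
    have hev : ∀ᶠ s in 𝓝[<] t, s ∈ Ioo 0 t := Ioo_mem_nhdsLT ht.1
    let L : Fin n → Prop := fun i => ∀ s ∈ Ico 0 t, I s < x i
    have hL1 : ∀ i, I t < x i → L i := fun i h s hs =>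
      (hIm s t hs.1 hs.2.le ht.2).trans_lt h
    have hL2 : ∀ i, L i → I t ≤ x i := by
      intro i h
      have hle : 𝓝[<] t ≤ 𝓝[Icc 0 T] t := by
        refine le_inf nhdsWithin_le_nhds (le_principal_iff.2 ?_)
        filter_upwards [hev] with s hs using ⟨hs.1.le, hs.2.le.trans ht.2⟩
      refine le_of_tendsto ((hIc t htI).mono_left hle) ?_
      filter_upwards [hev] with s hs using (h s ⟨hs.1.le, hs.2⟩).le
    have hninv : (n : ℝ≥0∞)⁻¹ ≠ ∞ := by simp [hn.ne']
    refine ⟨(n : ℝ≥0∞)⁻¹ • ∑ i : Fin n, (if L i then Measure.dirac (W i t) else 0),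
      ?_, fun f => ?_, fun A hA => ?_⟩
    · constructor
      rw [Measure.smul_apply, Measure.finsetSum_apply, smul_eq_mul]
      refine ENNReal.mul_lt_top hninv.lt_top (ENNReal.sum_lt_top.2 fun i _ => ?_)
      split_ifs <;> simp
    · refine stmt9_tendsto _ t nhdsWithin_le_nhds (fun s i => I s < x i) L ?_ W hW μ ?_ f
      · intro i
        by_cases h : L i
        · filter_upwards [hev] with s hs
          exact ⟨fun _ => h, fun _ => h s ⟨hs.1.le, hs.2⟩⟩
        · have h' := h
          simp only [L, not_forall, not_lt] at h'
          obtain ⟨s0, hs0, hx0⟩ := h'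
          have h2 : ∀ᶠ s in 𝓝[<] t, s ∈ Ioo s0 t := Ioo_mem_nhdsLT hs0.2
          filter_upwards [h2] with s hs
          refine ⟨fun h3 => absurd h3 (not_lt.2 ?_), fun h3 => absurd h3 h⟩
          exact hx0.trans (hIm s0 s hs0.1 hs.1.le (hs.2.le.trans ht.2))
      · filter_upwards [hev] with s hs using hμ s ⟨hs.1.le, hs.2.le.trans ht.2⟩
    · rw [hμ t htI]
      simp only [Measure.smul_apply, Measure.finsetSum_apply, smul_eq_mul]
      constructor
      · gcongr with i
        split_ifs with h1 h2
        · exact le_rfl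
        · exact absurd (hL1 i h1) h2
        · exact Measure.zero_le _
        · exact le_rfl
      · have key : ∑ i : Fin n, (if I t = x i then (1 : ℝ≥0∞) else 0) ≤ 1 := by
          rw [Finset.sum_boole]
          have : (Finset.univ.filter fun i => I t = x i).card ≤ 1 := by
            refine Finset.card_le_one.2 fun a ha b hb => hxinj ?_
            simp only [Finset.mem_filter, Finset.mem_univ, true_and] at ha hb
            rw [← ha, hb]
          exact_mod_cast this
        refine le_trans ?_ (add_le_add_right
          (mul_le_of_le_one_right (zero_le (a := (n : ℝ≥0∞)⁻¹)) key) _)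
        rw [← mul_add, ← Finset.sum_add_distrib]
        gcongr with i
        by_cases h1 : I t < x i
        · simp [h1, hL1 i h1]
        · by_cases h2 : L i
          · have h3 : I t = x i := le_antisymm (hL2 i h2) (not_lt.1 h1)
            rw [if_pos h2, if_neg h1, if_pos h3]
            rw [Measure.coe_zero, Pi.zero_apply, zero_add]
            exact prob_le_one
          · simp [h2]
end

section
/- Let d ∈ ℕ and let ζ : ℝ^d → [0,∞) be continuous and satisfy the subquadratic growth condition. For t > 0 and x ∈ ℝ^d let p(t,x) := (2πt)^{−d/2} exp(−‖x‖²/(2t)) be the Gaussian heat kernel, and set b(t) := ∫_{ℝ^d} ζ(x) p(t,x) dx (which is finite), a(t) := (1 + ∫₀ᵗ b(s) ds)^{-1}, and u(t,x) := a(t) p(t,x). Then: (i) for every t > 0 and x ∈ ℝ^d, ∂u/∂t (t,x) = (1/2) Δ_x u(t,x) − ( ∫_{ℝ^d} ζ(y) u(t,y) dy ) · u(t,x), where Δ_x denotes the Laplacian in the space variable (the sum of the second partial derivatives in the coordinates of x); and (ii) the measures u(t,x) dx converge weakly to the Dirac measure δ₀ on ℝ^d as t ↓ 0. -/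
open MeasureTheory Set Filter Topology BoundedContinuousFunction

lemma aux_int_exp (d : ℕ) (c : ℝ) (hc : 0 < c) :
    Integrable (fun y : EuclideanSpace ℝ (Fin d) => Real.exp (-c * ‖y‖ ^ 2)) := by
  by_contra h
  have h1 := GaussianFourier.integral_rexp_neg_mul_sq_norm (V := EuclideanSpace ℝ (Fin d)) hc
  rw [integral_undef h] at h1
  have : 0 < (Real.pi / c) ^ ((Module.finrank ℝ (EuclideanSpace ℝ (Fin d)) : ℝ) / 2) := by
    have := Real.pi_pos
    positivity
  exact absurd h1 this.ne

/-- standard Gaussian density -/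
noncomputable def auxg (d : ℕ) (y : EuclideanSpace ℝ (Fin d)) : ℝ :=
  (2 * Real.pi) ^ (-(d : ℝ) / 2) * Real.exp (-(1/2) * ‖y‖ ^ 2)

lemma auxg_nonneg (d : ℕ) (y : EuclideanSpace ℝ (Fin d)) : 0 ≤ auxg d y := by
  have := Real.pi_pos
  unfold auxg; positivity

lemma auxg_cont (d : ℕ) : Continuous (auxg d) := by
  unfold auxg; fun_prop

lemma auxg_integral (d : ℕ) : ∫ y, auxg d y = 1 := by
  unfold auxg
  rw [integral_const_mul,
    GaussianFourier.integral_rexp_neg_mul_sq_norm (by norm_num : (0:ℝ) < 1/2)]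
  simp only [finrank_euclideanSpace, Fintype.card_fin]
  have h : Real.pi / (1/2) = 2 * Real.pi := by ring
  rw [h, ← Real.rpow_add (by have := Real.pi_pos; positivity)]
  have : -(d:ℝ)/2 + d/2 = 0 := by ring
  rw [this, Real.rpow_zero]

lemma auxg_bound_int (d : ℕ) (K : ℝ) :
    Integrable (fun y => K * (1 + ‖y‖ ^ 2) * auxg d y) := by
  have h1 := (aux_int_exp d (1/4) (by norm_num)).const_mul
    (5 * |K| * (2 * Real.pi) ^ (-(d : ℝ) / 2))
  refine h1.mono' ?_ (ae_of_all _ fun y => ?_)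
  · have := auxg_cont d
    exact Continuous.aestronglyMeasurable (by fun_prop)
  · have hpi := Real.pi_pos
    have hq : (0:ℝ) ≤ (2 * Real.pi) ^ (-(d : ℝ) / 2) := by positivity
    rw [Real.norm_eq_abs, abs_mul, abs_mul, abs_of_nonneg (auxg_nonneg d y),
      abs_of_nonneg (by positivity : (0:ℝ) ≤ 1 + ‖y‖ ^ 2)]
    unfold auxg
    have e : Real.exp (-(1/2) * ‖y‖ ^ 2)
        = Real.exp (-(1/4) * ‖y‖ ^ 2) * Real.exp (-(1/4) * ‖y‖ ^ 2) := by
      rw [← Real.exp_add]; ring_nf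
    have e2 : (1 + ‖y‖ ^ 2) * Real.exp (-(1/4) * ‖y‖ ^ 2) ≤ 5 := by
      have h3 := Real.add_one_le_exp (1/4 * ‖y‖ ^ 2)
      have h4 : Real.exp (1/4 * ‖y‖ ^ 2) * Real.exp (-(1/4) * ‖y‖ ^ 2) = 1 := by
        rw [← Real.exp_add]; ring_nf; simp
      have h5 := Real.exp_pos (-(1/4) * ‖y‖ ^ 2)
      nlinarith [sq_nonneg ‖y‖]
    rw [e]
    calc _ = (|K| * (2 * Real.pi) ^ (-(d : ℝ) / 2) * Real.exp (-(1/4) * ‖y‖ ^ 2)) *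
          ((1 + ‖y‖ ^ 2) * Real.exp (-(1/4) * ‖y‖ ^ 2)) := by ring
      _ ≤ (|K| * (2 * Real.pi) ^ (-(d : ℝ) / 2) * Real.exp (-(1/4) * ‖y‖ ^ 2)) * 5 := by
          gcongr
      _ = _ := by ring

lemma aux_dom {d : ℕ} {F : EuclideanSpace ℝ (Fin d) → ℝ} {K : ℝ}
    (hK : ∀ y, |F y| ≤ K * (1 + ‖y‖ ^ 2)) (T t : ℝ) (ht : |t| ≤ T) (y) :
    ‖F (√t • y) * auxg d y‖ ≤ (K * (1 + T)) * (1 + ‖y‖ ^ 2) * auxg d y := by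
  have hK0 : 0 ≤ K := by
    have := (abs_nonneg _).trans (hK 0)
    simpa using this
  have hT : 0 ≤ T := (abs_nonneg _).trans ht
  rw [norm_mul, Real.norm_eq_abs, Real.norm_of_nonneg (auxg_nonneg d y)]
  refine mul_le_mul_of_nonneg_right ((hK _).trans ?_) (auxg_nonneg d y)
  rw [norm_smul, mul_pow, Real.norm_eq_abs, sq_abs, mul_assoc]
  have : √t ^ 2 ≤ T := by
    rcases le_total 0 t with h | h
    · rw [Real.sq_sqrt h]; exact (le_abs_self t).trans ht
    · rw [Real.sqrt_eq_zero_of_nonpos h]; simpa using hT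
  refine mul_le_mul_of_nonneg_left ?_ hK0
  nlinarith [sq_nonneg ‖y‖]

lemma aux_int {d : ℕ} {F : EuclideanSpace ℝ (Fin d) → ℝ} (hF : Continuous F) {K : ℝ}
    (hK : ∀ y, |F y| ≤ K * (1 + ‖y‖ ^ 2)) (t : ℝ) :
    Integrable (fun y => F (√t • y) * auxg d y) := by
  refine (auxg_bound_int d (K * (1 + |t|))).mono' ?_ (ae_of_all _ (aux_dom hK _ t le_rfl))
  have := auxg_cont d
  exact Continuous.aestronglyMeasurable (by fun_prop)

lemma aux_cont {d : ℕ} {F : EuclideanSpace ℝ (Fin d) → ℝ} (hF : Continuous F) {K : ℝ}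
    (hK : ∀ y, |F y| ≤ K * (1 + ‖y‖ ^ 2)) :
    Continuous (fun t : ℝ => ∫ y, F (√t • y) * auxg d y) := by
  have hg := auxg_cont d
  rw [continuous_iff_continuousAt]
  intro t₀
  refine continuousAt_of_dominated
    (bound := fun y => (K * (1 + (|t₀| + 1))) * (1 + ‖y‖ ^ 2) * auxg d y) ?_ ?_
    (auxg_bound_int d _) ?_
  · exact Eventually.of_forall fun t => Continuous.aestronglyMeasurable (by fun_prop)
  · have : ∀ᶠ t : ℝ in 𝓝 t₀, |t| < |t₀| + 1 :=
      (continuous_abs.tendsto t₀).eventually_lt_const (by linarith)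
    filter_upwards [this] with t ht
    exact ae_of_all _ (aux_dom hK _ t ht.le)
  · exact ae_of_all _ fun y => by fun_prop

lemma aux_scale {d : ℕ} {t : ℝ} (ht : 0 < t) (x : EuclideanSpace ℝ (Fin d)) :
    (2 * Real.pi * t) ^ (-(d : ℝ) / 2) * Real.exp (-‖x‖ ^ 2 / (2 * t))
      = ((√t)⁻¹) ^ d * auxg d ((√t)⁻¹ • x) := by
  unfold auxg
  have hpi := Real.pi_pos
  rw [Real.mul_rpow (by positivity) ht.le, norm_smul, mul_pow, Real.norm_eq_abs, sq_abs, inv_pow (√t) 2,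
    Real.sq_sqrt ht.le]
  have h1 : t ^ (-(d:ℝ)/2) = ((√t)⁻¹) ^ d := by
    rw [Real.sqrt_eq_rpow, ← Real.rpow_neg ht.le, ← Real.rpow_natCast, ← Real.rpow_mul ht.le]
    congr 1; ring
  have h2 : -‖x‖ ^ 2 / (2 * t) = -(1/2) * (t⁻¹ * ‖x‖ ^ 2) := by field_simp
  rw [h1, h2]; ring

lemma aux_scale_fun {d : ℕ} (F : EuclideanSpace ℝ (Fin d) → ℝ) {t : ℝ} (ht : 0 < t) :
    (fun x => F x * ((2 * Real.pi * t) ^ (-(d : ℝ) / 2) * Real.exp (-‖x‖ ^ 2 / (2 * t))))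
    = fun x => ((√t)⁻¹) ^ d * (fun y => F (√t • y) * auxg d y) ((√t)⁻¹ • x) := by
  have hs : √t ≠ 0 := (Real.sqrt_pos.2 ht).ne'
  funext x
  rw [aux_scale ht]
  simp only [smul_smul, mul_inv_cancel₀ hs, one_smul]
  ring

lemma aux_cov_int {d : ℕ} {F : EuclideanSpace ℝ (Fin d) → ℝ} (hF : Continuous F) {K : ℝ}
    (hK : ∀ y, |F y| ≤ K * (1 + ‖y‖ ^ 2)) {t : ℝ} (ht : 0 < t) :
    Integrable (fun x => F x *
      ((2 * Real.pi * t) ^ (-(d : ℝ) / 2) * Real.exp (-‖x‖ ^ 2 / (2 * t)))) := by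
  have hs : √t ≠ 0 := (Real.sqrt_pos.2 ht).ne'
  rw [aux_scale_fun F ht]
  exact ((aux_int hF hK t).comp_smul (inv_ne_zero hs)).const_mul _

lemma aux_cov {d : ℕ} (F : EuclideanSpace ℝ (Fin d) → ℝ) {t : ℝ} (ht : 0 < t) :
    (∫ x, F x * ((2 * Real.pi * t) ^ (-(d : ℝ) / 2) * Real.exp (-‖x‖ ^ 2 / (2 * t))))
    = ∫ y, F (√t • y) * auxg d y := by
  have hs := Real.sqrt_pos.2 ht
  rw [aux_scale_fun F ht, integral_const_mul,
    Measure.integral_comp_smul volume (fun y => F (√t • y) * auxg d y)]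
  simp only [finrank_euclideanSpace, Fintype.card_fin, smul_eq_mul]
  rw [abs_of_pos (by positivity), ← mul_assoc, mul_inv_cancel₀ (by positivity), one_mul]

lemma aux_dt {d : ℕ} (x : EuclideanSpace ℝ (Fin d)) {t : ℝ} (ht : 0 < t) :
    HasDerivAt (fun t : ℝ => (2 * Real.pi * t) ^ (-(d : ℝ) / 2) * Real.exp (-‖x‖ ^ 2 / (2 * t)))
      ((‖x‖ ^ 2 / (2 * t ^ 2) - d / (2 * t)) *
        ((2 * Real.pi * t) ^ (-(d : ℝ) / 2) * Real.exp (-‖x‖ ^ 2 / (2 * t)))) t := by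
  have hpi := Real.pi_pos
  have h0 : (0:ℝ) < 2 * Real.pi * t := by positivity
  have h1 : HasDerivAt (fun t : ℝ => 2 * Real.pi * t) (2 * Real.pi) t := by
    simpa using (hasDerivAt_id t).const_mul (2 * Real.pi)
  have h2 := h1.rpow_const (p := -(d:ℝ)/2) (Or.inl h0.ne')
  have h3 : HasDerivAt (fun t : ℝ => -‖x‖ ^ 2 / (2 * t)) (‖x‖ ^ 2 / (2 * t ^ 2)) t := by
    have h4 : HasDerivAt (fun t : ℝ => 2 * t) 2 t := by
      simpa using (hasDerivAt_id t).const_mul 2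
    have h5 := (hasDerivAt_const t (-‖x‖ ^ 2)).div h4 (by positivity)
    refine h5.congr_deriv ?_
    field_simp
    ring
  refine (h2.mul h3.exp).congr_deriv ?_
  rw [Real.rpow_sub h0, Real.rpow_one]
  field_simp
  ring

lemma aux_dxx {d : ℕ} (c : ℝ) (x : EuclideanSpace ℝ (Fin d)) {t : ℝ} (ht : 0 < t) (i : Fin d) :
    deriv (deriv (fun s : ℝ => c *
      Real.exp (-‖x + s • EuclideanSpace.single i (1 : ℝ)‖ ^ 2 / (2 * t)))) 0
    = (x i ^ 2 / t ^ 2 - 1 / t) * (c * Real.exp (-‖x‖ ^ 2 / (2 * t))) := by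
  have hn : ∀ s : ℝ, ‖x + s • EuclideanSpace.single i (1 : ℝ)‖ ^ 2
      = ‖x‖ ^ 2 + 2 * s * x i + s ^ 2 := by
    intro s
    rw [norm_add_sq_real, inner_smul_right, norm_smul]
    simp [EuclideanSpace.inner_single_right]
    ring
  simp only [hn]
  have h1 : ∀ s : ℝ, HasDerivAt (fun s : ℝ => -(‖x‖ ^ 2 + 2 * s * x i + s ^ 2) / (2 * t))
      (-(x i + s) / t) s := by
    intro s
    have h := (((((hasDerivAt_id s).const_mul 2).mul_const (x i)).const_add (‖x‖ ^ 2)).add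
      ((hasDerivAt_id s).pow 2)).neg.div_const (2 * t)
    refine h.congr_deriv ?_
    simp
    field_simp
  have h2 : ∀ s : ℝ, HasDerivAt
      (fun s : ℝ => c * Real.exp (-(‖x‖ ^ 2 + 2 * s * x i + s ^ 2) / (2 * t)))
      (c * (Real.exp (-(‖x‖ ^ 2 + 2 * s * x i + s ^ 2) / (2 * t)) * (-(x i + s) / t))) s :=
    fun s => (h1 s).exp.const_mul c
  rw [funext fun s => (h2 s).deriv]
  have h3 : HasDerivAt (fun s : ℝ => -(x i + s) / t) (-1 / t) 0 :=
    (((hasDerivAt_id (0:ℝ)).const_add (x i)).neg).div_const t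
  refine (((h1 0).exp.mul h3).const_mul c).deriv.trans ?_
  simp
  field_simp
  ring

/-- with `p(t,x)` the Gaussian heat kernel on `ℝ^d`,
`b(t) = ∫ ζ p(t,·)`, `a(t) = (1 + ∫₀ᵗ b)⁻¹` and `u(t,x) = a(t) p(t,x)`, the function `u`
solves the nonlinear nonlocal reaction–diffusion equation
`∂u/∂t = (1/2) Δu − (∫ ζ u) u` on `(0,∞) × ℝ^d` (with `b(t)` finite, i.e. `ζ p(t,·)`
integrable, for every `t > 0`), and `u(t,x) dx → δ₀` weakly as `t ↓ 0`. -/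
theorem stmt13 (d : ℕ)
    (ζ : EuclideanSpace ℝ (Fin d) → ℝ) (hζc : Continuous ζ) (hζ0 : ∀ y, 0 ≤ ζ y)
    (Cζ pexp : ℝ) (hC : 0 < Cζ) (hp0 : 0 ≤ pexp) (hp2 : pexp < 2)
    (hgrowth : ∀ y, ζ y ≤ Cζ * (1 + ‖y‖ ^ pexp))
    (p : ℝ → EuclideanSpace ℝ (Fin d) → ℝ)
    (hp : ∀ t x, p t x =
      (2 * Real.pi * t) ^ (-(d : ℝ) / 2) * Real.exp (-‖x‖ ^ 2 / (2 * t)))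
    (b : ℝ → ℝ) (hb : ∀ t, b t = ∫ x, ζ x * p t x)
    (a : ℝ → ℝ) (ha : ∀ t, a t = (1 + ∫ s in (0 : ℝ)..t, b s)⁻¹)
    (u : ℝ → EuclideanSpace ℝ (Fin d) → ℝ) (hu : ∀ t x, u t x = a t * p t x) :
    (∀ t : ℝ, 0 < t → Integrable (fun x => ζ x * p t x)) ∧
    (∀ t : ℝ, 0 < t → ∀ x : EuclideanSpace ℝ (Fin d),
      HasDerivAt (fun τ => u τ x)
        ((1 / 2) * (∑ i : Fin d,
            deriv (deriv (fun s : ℝ => u t (x + s • EuclideanSpace.single i (1 : ℝ)))) 0)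
          - (∫ y, ζ y * u t y) * u t x) t) ∧
    (∀ f : EuclideanSpace ℝ (Fin d) →ᵇ ℝ,
      Tendsto (fun t => ∫ x, f x * u t x) (𝓝[>] (0 : ℝ)) (𝓝 (f 0))) := by
  have hK : ∀ y, |ζ y| ≤ (2 * Cζ) * (1 + ‖y‖ ^ 2) := by
    intro y
    rw [abs_of_nonneg (hζ0 y)]
    refine (hgrowth y).trans ?_
    have : ‖y‖ ^ pexp ≤ 1 + ‖y‖ ^ 2 := by
      rcases le_total ‖y‖ 1 with h | h
      · have := Real.rpow_le_one (norm_nonneg y) h hp0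
        nlinarith [sq_nonneg ‖y‖]
      · have := Real.rpow_le_rpow_of_exponent_le h hp2.le
        rw [Real.rpow_two] at this
        linarith
    nlinarith [sq_nonneg ‖y‖]
  set B : ℝ → ℝ := fun t => ∫ y, ζ (√t • y) * auxg d y with hB
  have hBc : Continuous B := aux_cont hζc hK
  have hB0 : ∀ t, 0 ≤ B t := fun t =>
    integral_nonneg fun y => mul_nonneg (hζ0 _) (auxg_nonneg d y)
  have hbB : ∀ t, 0 < t → b t = B t := by
    intro t ht
    rw [hb]
    simp only [hp]
    exact aux_cov ζ ht
  have haB : ∀ t, 0 < t → a t = (1 + ∫ s in (0 : ℝ)..t, B s)⁻¹ := by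
    intro t ht
    rw [ha]
    congr 2
    refine intervalIntegral.integral_congr_ae (ae_of_all _ fun s hs => ?_)
    rw [uIoc_of_le ht.le] at hs
    exact hbB s hs.1
  have hD : ∀ t, HasDerivAt (fun t => 1 + ∫ s in (0 : ℝ)..t, B s) (B t) t := fun t =>
    (intervalIntegral.integral_hasDerivAt_right (hBc.intervalIntegrable _ _)
      hBc.stronglyMeasurable.stronglyMeasurableAtFilter hBc.continuousAt).const_add 1
  refine ⟨fun t ht => ?_, fun t ht x => ?_, fun f => ?_⟩
  · simp only [hp]
    exact aux_cov_int hζc hK ht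
  · have hpos : 0 < 1 + ∫ s in (0 : ℝ)..t, B s := by
      have := intervalIntegral.integral_nonneg (μ := volume) ht.le (fun s _ => hB0 s)
      linarith
    have hda : HasDerivAt a (-(B t) * a t ^ 2) t := by
      have h1 := (hD t).inv hpos.ne'
      have h2 : a =ᶠ[𝓝 t] (fun t => 1 + ∫ s in (0 : ℝ)..t, B s)⁻¹ := by
        filter_upwards [lt_mem_nhds ht] with s hs
        exact haB s hs
      refine (h1.congr_of_eventuallyEq h2).congr_deriv ?_
      rw [haB t ht]
      field_simp
    have hdp : HasDerivAt (fun τ => p τ x) ((‖x‖ ^ 2 / (2 * t ^ 2) - d / (2 * t)) * p t x) t := by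
      simp only [hp]
      exact aux_dt x ht
    have hui : ∫ y, ζ y * u t y = a t * B t := by
      rw [← hbB t ht, hb, ← integral_const_mul]
      congr 1; funext y; rw [hu]; ring
    have hlap : ∀ i : Fin d,
        deriv (deriv (fun s : ℝ => u t (x + s • EuclideanSpace.single i (1 : ℝ)))) 0
        = (x i ^ 2 / t ^ 2 - 1 / t) * u t x := by
      intro i
      have := aux_dxx (a t * (2 * Real.pi * t) ^ (-(d : ℝ) / 2)) x ht i
      simp only [hu, hp, ← mul_assoc] at this ⊢
      exact this
    have hxx : ‖x‖ ^ 2 = ∑ i, x i ^ 2 := EuclideanSpace.real_norm_sq_eq x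
    rw [Finset.sum_congr rfl fun i _ => hlap i, ← Finset.sum_mul, Finset.sum_sub_distrib,
      ← Finset.sum_div, ← hxx, hui]
    simp only [hu]
    refine (hda.mul hdp).congr_deriv ?_
    simp
    field_simp
    ring
  · have hfK : ∀ y, |f y| ≤ ‖f‖ * (1 + ‖y‖ ^ 2) := by
      intro y
      have := f.norm_coe_le_norm y
      rw [Real.norm_eq_abs] at this
      nlinarith [norm_nonneg f, mul_nonneg (norm_nonneg f) (sq_nonneg ‖y‖)]
    have h1 := (aux_cont f.continuous hfK).tendsto 0
    have h2 := ((hD 0).continuousAt.inv₀ (by simp)).tendsto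
    have h3 := (h2.mul h1).mono_left (nhdsWithin_le_nhds (s := Ioi (0:ℝ)))
    simp only [Pi.inv_apply, intervalIntegral.integral_same, Real.sqrt_zero, zero_smul,
      integral_const_mul, auxg_integral, add_zero, inv_one, one_mul, mul_one] at h3
    refine h3.congr' ?_
    filter_upwards [self_mem_nhdsWithin] with t ht
    have ht : 0 < t := ht
    rw [← aux_cov f ht, ← haB t ht, ← integral_const_mul]
    congr 1; funext y; rw [hu, hp]; ring
end
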